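/- arXiv:2012.02150 — 3 statements merged into one kernel-verified Lean document; each statement's English description precedes it below -/
import Mathlib

section
/- Let p(z) = a_n z^n + ⋯ + a_1 z + 1 be a complex polynomial of degree n with constant term 1 and a_n ≠ 0, let ρ_min be the least of the moduli of the roots of p, and let b_k denote the coefficient of z^k in the Maclaurin series of 1/p(z) (equivalently, the k-th coefficient of the formal power series inverse of p). Then for every k ≥ 0, |b_k| ≤ ρ_min^{−k} · (k + n/2)^{n−1} / (n−1)!. -/
open Polynomial

/-- The minimum of the moduli of the roots of `p`. -/
noncomputable def rhoMin (p : Polynomial ℂ) : ℝ :=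
  sInf {x : ℝ | ∃ ρ : ℂ, p.eval ρ = 0 ∧ x = ‖ρ‖}

theorem aux_coeff (r : ℝ) (hr : 0 < r) (n : ℕ) : ∀ (p : Polynomial ℂ), p.natDegree = n →
    p.coeff 0 = 1 → (∀ z, p.eval z = 0 → r ≤ ‖z‖) → ∀ k : ℕ,
    ‖(PowerSeries.coeff k) ((p : PowerSeries ℂ))⁻¹‖ ≤ r⁻¹ ^ k * (Nat.multichoose n k : ℝ) := by
  induction n with
  | zero =>
    intro p hp h0 _ k
    have : p = 1 := by
      rw [Polynomial.eq_C_of_natDegree_eq_zero hp, h0, C_1]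
    subst this
    have h1 : ((1 : Polynomial ℂ) : PowerSeries ℂ)⁻¹ = 1 := by
      rw [Polynomial.coe_one, PowerSeries.inv_eq_iff_mul_eq_one] <;> simp
    rw [h1]
    cases k with
    | zero => simp
    | succ k => simp [PowerSeries.coeff_one]
  | succ n ih =>
    intro p hp h0 hroot k
    obtain ⟨a, ha⟩ := Complex.exists_root (f := p) (by
      rw [← Polynomial.natDegree_pos_iff_degree_pos]; omega)
    obtain ⟨s, hs⟩ := Polynomial.dvd_iff_isRoot.mpr ha
    have har : r ≤ ‖a‖ := hroot a ha
    have ha0 : a ≠ 0 := by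
      intro h; rw [h, norm_zero] at har; linarith
    have hc : -a * s.coeff 0 = 1 := by
      rw [← h0, hs]; simp [Polynomial.mul_coeff_zero]
    have hsne : s ≠ 0 := by
      rintro rfl; simp at hc
    set q : Polynomial ℂ := C (-a) * s with hq
    have hqd : q.natDegree = n := by
      rw [hq, Polynomial.natDegree_C_mul (neg_ne_zero.mpr ha0)]
      rw [hs, Polynomial.natDegree_mul (X_sub_C_ne_zero a) hsne, natDegree_X_sub_C] at hp
      omega
    have hq0 : q.coeff 0 = 1 := by rw [hq, coeff_C_mul, hc]
    have hpq : p = (1 - C a⁻¹ * X) * q := by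
      have : (C a⁻¹ * C a : Polynomial ℂ) = 1 := by rw [← C_mul, inv_mul_cancel₀ ha0, C_1]
      rw [hs, hq, C_neg]
      linear_combination (-X * s) * this
    have hqroot : ∀ z, q.eval z = 0 → r ≤ ‖z‖ := by
      intro z hz
      apply hroot
      rw [hpq, eval_mul, hz, mul_zero]
    have IH := ih q hqd hq0 hqroot
    have hp0' : PowerSeries.constantCoeff (p : PowerSeries ℂ) ≠ 0 := by
      rw [← PowerSeries.coeff_zero_eq_constantCoeff_apply, Polynomial.coeff_coe, h0]; simp
    have hq0' : PowerSeries.constantCoeff (q : PowerSeries ℂ) ≠ 0 := by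
      rw [← PowerSeries.coeff_zero_eq_constantCoeff_apply, Polynomial.coeff_coe, hq0]; simp
    have key : (q : PowerSeries ℂ)⁻¹ = (p : PowerSeries ℂ)⁻¹
        - PowerSeries.C a⁻¹ * ((p : PowerSeries ℂ)⁻¹ * PowerSeries.X) := by
      rw [PowerSeries.inv_eq_iff_mul_eq_one hq0']
      have h1 := PowerSeries.mul_inv_cancel (p : PowerSeries ℂ) hp0'
      have h2 : (p : PowerSeries ℂ) = (1 - PowerSeries.C a⁻¹ * PowerSeries.X) * (q : PowerSeries ℂ) := by
        conv_lhs => rw [hpq]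
        simp
      generalize (p : PowerSeries ℂ)⁻¹ = P at *
      rw [h2] at h1
      linear_combination h1
    have hinv : ‖a‖⁻¹ ≤ r⁻¹ := inv_anti₀ hr har
    induction k with
    | zero =>
      have h0c : PowerSeries.constantCoeff (p : PowerSeries ℂ) = 1 := by
        rw [← PowerSeries.coeff_zero_eq_constantCoeff_apply, Polynomial.coeff_coe, h0]
      simp [PowerSeries.constantCoeff_inv, h0, h0c]
    | succ k ihk =>
      have h3 := congrArg (PowerSeries.coeff (k+1)) key
      rw [map_sub, PowerSeries.coeff_C_mul, PowerSeries.coeff_succ_mul_X] at h3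
      have h4 : PowerSeries.coeff (k+1) (p : PowerSeries ℂ)⁻¹ =
        PowerSeries.coeff (k+1) (q : PowerSeries ℂ)⁻¹
          + a⁻¹ * PowerSeries.coeff k (p : PowerSeries ℂ)⁻¹ := by
        linear_combination -h3
      rw [h4, Nat.multichoose_succ_succ]
      push_cast
      calc _ ≤ _ := norm_add_le _ _
        _ ≤ r⁻¹ ^ (k+1) * (n.multichoose (k+1) : ℝ)
            + r⁻¹ * (r⁻¹ ^ k * ((n+1).multichoose k : ℝ)) := by
          rw [norm_mul, norm_inv]
          exact add_le_add (IH _) (mul_le_mul hinv ihk (norm_nonneg _) (by positivity))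
        _ = _ := by ring

theorem aux_prod (k m : ℕ) :
    ∏ i ∈ Finset.range m, ((k : ℝ) + 1 + i) ≤ ((k : ℝ) + ((m : ℝ) + 1) / 2) ^ m := by
  have hA : 0 ≤ ∏ i ∈ Finset.range m, ((k : ℝ) + 1 + i) :=
    Finset.prod_nonneg fun i _ => by positivity
  refine (pow_le_pow_iff_left₀ hA (by positivity) two_ne_zero).mp ?_
  have hrefl := Finset.prod_range_reflect (fun i : ℕ => ((k : ℝ) + 1 + i)) m
  rw [sq]
  nth_rewrite 2 [← hrefl]
  rw [← Finset.prod_mul_distrib, ← pow_mul, mul_comm m 2, pow_mul]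
  calc _ ≤ ∏ i ∈ Finset.range m, ((k : ℝ) + ((m : ℝ) + 1) / 2) ^ 2 := by
        apply Finset.prod_le_prod
        · intro i _; positivity
        · intro i hi
          have hi := Finset.mem_range.mp hi
          have : ((m - 1 - i : ℕ) : ℝ) = m - 1 - i := by
            rw [Nat.cast_sub (by omega), Nat.cast_sub (by omega)]; simp
          rw [this]
          nlinarith [sq_nonneg ((m : ℝ) - 1 - 2 * i)]
    _ = _ := by simp

/-- Theorem 3: if p has degree n, constant term 1, and b_k is the k-th
Maclaurin coefficient of 1/p (the k-th coefficient of the formal power series inverse of p),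
then |b_k| ≤ ρ_min^(-k) · (k + n/2)^(n-1) / (n-1)!. -/
theorem abs_inv_coeff_le
    (n : ℕ) (hn : 0 < n) (p : Polynomial ℂ) (hdeg : p.natDegree = n) (h0 : p.coeff 0 = 1)
    (k : ℕ) :
    ‖(PowerSeries.coeff k) ((p : PowerSeries ℂ))⁻¹‖ ≤
      (rhoMin p)⁻¹ ^ k * ((k : ℝ) + (n : ℝ) / 2) ^ (n - 1) / ((n - 1).factorial : ℝ) := by
  have hp0 : p ≠ 0 := by rintro rfl; simp at h0
  obtain ⟨a, ha⟩ := Complex.exists_root (f := p) (by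
      rw [← Polynomial.natDegree_pos_iff_degree_pos]; omega)
  have hfin : {x : ℝ | ∃ ρ : ℂ, p.eval ρ = 0 ∧ x = ‖ρ‖}.Finite := by
    refine ((p.roots.toFinset.finite_toSet).image (fun z : ℂ => ‖z‖)).subset ?_
    rintro x ⟨z, hz, rfl⟩
    exact ⟨z, by simp [hp0, hz], rfl⟩
  have hne : {x : ℝ | ∃ ρ : ℂ, p.eval ρ = 0 ∧ x = ‖ρ‖}.Nonempty := ⟨‖a‖, a, ha, rfl⟩
  have hpos : 0 < rhoMin p := by
    obtain ⟨z, hz, h⟩ := hne.csInf_mem hfin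
    rw [rhoMin, h, norm_pos_iff]
    rintro rfl
    rw [← Polynomial.coeff_zero_eq_eval_zero, h0] at hz
    exact one_ne_zero hz
  have hroot : ∀ z, p.eval z = 0 → rhoMin p ≤ ‖z‖ := fun z hz =>
    csInf_le hfin.bddBelow ⟨z, hz, rfl⟩
  refine (aux_coeff _ hpos n p hdeg h0 hroot k).trans ?_
  rw [mul_div_assoc]
  apply mul_le_mul_of_nonneg_left _ (by positivity)
  obtain ⟨m, rfl⟩ : ∃ m, n = m + 1 := ⟨n - 1, by omega⟩
  rw [Nat.add_sub_cancel, le_div_iff₀ (by positivity)]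
  refine le_trans (le_of_eq ?_) ((aux_prod k m).trans (le_of_eq (by push_cast; ring)))
  have h5 := Nat.ascFactorial_eq_factorial_mul_choose k m
  rw [Nat.ascFactorial_eq_prod_range] at h5
  have h6 : Nat.multichoose (m+1) k = (k + m).choose m := by
    rw [Nat.multichoose_eq, show m + 1 + k - 1 = k + m by omega, Nat.choose_symm_add]
  rw [h6]
  have h7 := congrArg (Nat.cast : ℕ → ℝ) h5
  push_cast at h7
  rw [h7]; ring
end

section
/- Let p(z) = a_n z^n + ⋯ + a_1 z + 1 be a complex polynomial of degree n with constant term 1 and a_n ≠ 0, let ρ_min be the least of the moduli of the roots of p, and let b_k denote the coefficient of z^k in the Maclaurin series of 1/p(z). Then for every k ≥ 0, |b_k| ≤ C(n+k−1, k) · ρ_min^{−k}, where C(n+k−1, k) is the binomial coefficient. -/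
open Polynomial

lemma inv_coeff_aux (c : ℝ) (hc : 0 ≤ c) (n : ℕ) : ∀ (p : Polynomial ℂ), p.natDegree = n →
    p.coeff 0 = 1 → (∀ ρ : ℂ, p.eval ρ = 0 → ‖ρ‖⁻¹ ≤ c) → ∀ k : ℕ,
    ‖(PowerSeries.coeff (R := ℂ) k) ((p : PowerSeries ℂ))⁻¹‖ ≤
      ((n + k - 1).choose k : ℝ) * c ^ k := by
  induction n with
  | zero =>
    intro p hp h0 _ k
    have h1 : p = 1 := by
      rw [Polynomial.eq_C_of_natDegree_eq_zero hp, h0]; simp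
    subst h1
    have h2 : (((1 : Polynomial ℂ) : PowerSeries ℂ))⁻¹ = 1 := by
      rw [PowerSeries.inv_eq_iff_mul_eq_one] <;> simp
    rw [h2, PowerSeries.coeff_one]
    split_ifs with hk
    · subst hk; simp
    · simp only [norm_zero]; positivity
  | succ n ih =>
    intro p hp h0 hr
    obtain ⟨ρ, hρ⟩ : ∃ ρ, p.IsRoot ρ := by
      apply Complex.exists_root
      rw [← Polynomial.natDegree_pos_iff_degree_pos]; omega
    have hρ0 : ρ ≠ 0 := by
      rintro rfl
      rw [Polynomial.IsRoot, ← Polynomial.coeff_zero_eq_eval_zero, h0] at hρ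
      exact one_ne_zero hρ
    obtain ⟨q', hq'⟩ := Polynomial.dvd_iff_isRoot.mpr hρ
    obtain ⟨q, hq⟩ : ∃ q : Polynomial ℂ, p = (1 - C ρ⁻¹ * X) * q := by
      refine ⟨C (-ρ) * q', ?_⟩
      have : (C ρ⁻¹ * C ρ : Polynomial ℂ) = 1 := by
        rw [← C_mul, inv_mul_cancel₀ hρ0, C_1]
      rw [hq', C_neg]
      linear_combination (-X * q') * this
    have hq0 : q.coeff 0 = 1 := by
      rw [hq, Polynomial.mul_coeff_zero] at h0
      simpa using h0
    have hqne : q ≠ 0 := by rintro rfl; simp at hq0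
    have hl : (1 - C ρ⁻¹ * X : Polynomial ℂ).natDegree = 1 := by
      have : (1 - C ρ⁻¹ * X : Polynomial ℂ) = C (-ρ⁻¹) * X + C 1 := by
        rw [C_neg, C_1]; ring
      rw [this]
      exact Polynomial.natDegree_linear (neg_ne_zero.mpr (inv_ne_zero hρ0))
    have hqd : q.natDegree = n := by
      have : (1 - C ρ⁻¹ * X : Polynomial ℂ) ≠ 0 := by
        intro h; rw [h] at hl; simp at hl
      rw [hq, Polynomial.natDegree_mul this hqne, hl] at hp
      omega
    have hqr : ∀ k, _ := ih q hqd hq0 (fun s hs => hr s (by rw [hq, eval_mul, hs, mul_zero]))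
    have hρc : ‖ρ⁻¹‖ ≤ c := by rw [norm_inv]; exact hr ρ hρ
    have hcp : PowerSeries.constantCoeff (p : PowerSeries ℂ) ≠ 0 := by simp [h0]
    have hcq : PowerSeries.constantCoeff (q : PowerSeries ℂ) ≠ 0 := by simp [hq0]
    have key : (p : PowerSeries ℂ)⁻¹ =
        (q : PowerSeries ℂ)⁻¹ + PowerSeries.C ρ⁻¹ * (PowerSeries.X * (p : PowerSeries ℂ)⁻¹) := by
      have e1 := PowerSeries.mul_inv_cancel _ hcp
      have e2 := PowerSeries.mul_inv_cancel _ hcq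
      have e3 : (p : PowerSeries ℂ) =
          (1 - PowerSeries.C ρ⁻¹ * PowerSeries.X) * (q : PowerSeries ℂ) := by
        rw [hq]; simp
      generalize (p : PowerSeries ℂ)⁻¹ = P at *
      generalize (q : PowerSeries ℂ)⁻¹ = Q at *
      rw [e3] at e1
      linear_combination Q * e1 - (1 - PowerSeries.C ρ⁻¹ * PowerSeries.X) * P * e2
    intro k
    induction k with
    | zero => simp [h0]
    | succ k ihk =>
      rw [key, map_add, PowerSeries.coeff_C_mul, PowerSeries.coeff_succ_X_mul]
      have h1 := hqr (k + 1)
      have e1 : n + (k + 1) - 1 = n + k := by omega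
      have e2 : n + 1 + k - 1 = n + k := by omega
      have e3 : n + 1 + (k + 1) - 1 = n + k + 1 := by omega
      rw [e1] at h1
      rw [e2] at ihk
      rw [e3, Nat.choose_succ_succ]
      refine (norm_add_le _ _).trans ?_
      rw [norm_mul]
      have h2 := mul_le_mul hρc ihk (norm_nonneg _) hc
      push_cast
      calc _ ≤ _ := add_le_add h1 h2
        _ = _ := by ring

/-- if p has degree n, constant term 1, and b_k is the k-th Maclaurin
coefficient of 1/p, then |b_k| ≤ C(n+k-1, k) · ρ_min^(-k). -/
theorem abs_inv_coeff_le_choose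
    (n : ℕ) (hn : 0 < n) (p : Polynomial ℂ) (hdeg : p.natDegree = n) (h0 : p.coeff 0 = 1)
    (k : ℕ) :
    ‖(PowerSeries.coeff (R := ℂ) k) ((p : PowerSeries ℂ))⁻¹‖ ≤
      ((n + k - 1).choose k : ℝ) * (rhoMin p)⁻¹ ^ k := by
  have hp0 : p ≠ 0 := by rintro rfl; simp at h0
  have hfin : {x : ℝ | ∃ ρ : ℂ, p.eval ρ = 0 ∧ x = ‖ρ‖}.Finite := by
    refine ((Polynomial.finite_setOfPred_isRoot hp0).image (fun z : ℂ => ‖z‖)).subset ?_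
    rintro x ⟨ρ, h, rfl⟩
    exact ⟨ρ, h, rfl⟩
  have hne : {x : ℝ | ∃ ρ : ℂ, p.eval ρ = 0 ∧ x = ‖ρ‖}.Nonempty := by
    obtain ⟨ρ, hρ⟩ : ∃ ρ, p.IsRoot ρ := by
      apply Complex.exists_root
      rw [← Polynomial.natDegree_pos_iff_degree_pos]; omega
    exact ⟨_, ρ, hρ, rfl⟩
  have hpos : 0 < rhoMin p := by
    obtain ⟨ρ, hρ, h⟩ := hne.csInf_mem hfin
    rw [rhoMin, h, norm_pos_iff]
    rintro rfl
    rw [← Polynomial.coeff_zero_eq_eval_zero, h0] at hρ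
    exact one_ne_zero hρ
  refine inv_coeff_aux _ (inv_nonneg.mpr hpos.le) n p hdeg h0 (fun ρ hρ => ?_) k
  exact inv_anti₀ hpos (csInf_le hfin.bddBelow ⟨ρ, hρ, rfl⟩)
end

section
/- Let p(z) = a_n ∏_{i=1}^n (z − z_i) be a complex polynomial of degree n (with a_n ≠ 0), let k ≥ 0, and let z be a complex number with p(z) ≠ 0. Then the k-th derivative of 1/p at z equals ((−1)^k k! / p(z)) · Σ ∏_{i=1}^n (z − z_i)^{−k_i}, where the sum ranges over all n-tuples (k_1, …, k_n) of nonnegative integers with k_1 + ⋯ + k_n = k. -/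
open Polynomial

theorem aux_sum (n k : ℕ) (u : Fin (n+1) → ℂ) :
    ∑ f ∈ Finset.Nat.antidiagonalTuple (n+1) k, ∏ i, (u i) ^ (f i) =
      ∑ j ∈ Finset.range (k+1), u 0 ^ j *
        ∑ f ∈ Finset.Nat.antidiagonalTuple n (k - j), ∏ i, (u (Fin.succ i)) ^ (f i) := by
  simp_rw [Finset.mul_sum]
  rw [Finset.sum_sigma']
  refine Finset.sum_bij' (fun f _ => (⟨f 0, Fin.tail f⟩ : (_ : ℕ) × (Fin n → ℕ)))
    (fun x _ => Fin.cons x.1 x.2) ?_ ?_ ?_ ?_ ?_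
  · intro f hf
    rw [Finset.Nat.mem_antidiagonalTuple, Fin.sum_univ_succ] at hf
    simp only [Finset.mem_sigma, Finset.mem_range, Finset.Nat.mem_antidiagonalTuple, Fin.tail]
    constructor <;> omega
  · rintro ⟨j, f⟩ hf
    simp only [Finset.mem_sigma, Finset.mem_range, Finset.Nat.mem_antidiagonalTuple] at hf
    rw [Finset.Nat.mem_antidiagonalTuple, Fin.sum_univ_succ]
    simp only [Fin.cons_zero, Fin.cons_succ]
    omega
  · intro f hf
    simp
  · rintro ⟨j, f⟩ hf
    simp
  · intro f hf
    simp [Fin.prod_univ_succ, Fin.tail]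

theorem aux_inv (j : ℕ) (c w : ℂ) (h : w - c ≠ 0) :
    iteratedDeriv j (fun x : ℂ => (x - c)⁻¹) w =
      (-1) ^ j * (j.factorial : ℂ) * ((w - c)⁻¹ * (w - c)⁻¹ ^ j) := by
  have := congrFun (iter_deriv_inv_linear_sub j (1:ℂ) c) w
  rw [iteratedDeriv_eq_iterate]
  simp only [one_mul, one_pow, mul_one] at this
  rw [this]
  congr 1
  rw [zpow_sub₀ h]
  simp [div_eq_mul_inv]

theorem aux_prod_s5 (n : ℕ) : ∀ (z : Fin n → ℂ) (k : ℕ) (w : ℂ) (_ : ∀ i, w - z i ≠ 0),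
    iteratedDeriv k (fun x : ℂ => ∏ i, (x - z i)⁻¹) w =
      (-1) ^ k * (k.factorial : ℂ) * (∏ i, (w - z i)⁻¹) *
        ∑ f ∈ Finset.Nat.antidiagonalTuple n k, ∏ i, ((w - z i)⁻¹) ^ (f i) := by
  induction n with
  | zero =>
    intro z k w _
    cases k <;> simp [iteratedDeriv_const]
  | succ n ih =>
    intro z k w h
    simp only [Fin.prod_univ_succ (n := n) (fun i => (_ - z i)⁻¹)]
    rw [iteratedDeriv_fun_mul, aux_sum n k (fun i => (w - z i)⁻¹), Finset.mul_sum]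
    · refine Finset.sum_congr rfl fun j hj => ?_
      have hjk : j ≤ k := by simpa [Nat.lt_succ_iff] using hj
      rw [aux_inv j _ w (h 0), ih (fun i => z i.succ) (k - j) w (fun i => h _)]
      have e1 : (k.factorial : ℂ) = k.choose j * j.factorial * (k - j).factorial := by
        exact_mod_cast (Nat.choose_mul_factorial_mul_factorial hjk).symm
      have e2 : (-1 : ℂ) ^ k = (-1) ^ j * (-1) ^ (k - j) := by
        rw [← pow_add, Nat.add_sub_cancel' hjk]
      rw [e1, e2]
      ring
    · exact (contDiffAt_id.sub contDiffAt_const).inv (h 0)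
    · exact contDiffAt_prod fun i _ =>
        (contDiffAt_id.sub contDiffAt_const).inv (h i.succ)

/-- Leibniz-rule computation in Theorem 3: if
p(z) = a_n ∏ (z - z_i) and p(w) ≠ 0, then the k-th derivative of 1/p at w equals
((-1)^k k! / p(w)) · Σ_{k_1+⋯+k_n = k} ∏ (w - z_i)^(-k_i). -/
theorem iteratedDeriv_inv_eval
    (n : ℕ) (a : ℂ) (ha : a ≠ 0) (z : Fin n → ℂ) (p : Polynomial ℂ)
    (hp : p = Polynomial.C a * ∏ i, (Polynomial.X - Polynomial.C (z i)))
    (k : ℕ) (w : ℂ) (hw : p.eval w ≠ 0) :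
    iteratedDeriv k (fun x : ℂ => (p.eval x)⁻¹) w =
      ((-1) ^ k * (k.factorial : ℂ) / p.eval w) *
        ∑ f ∈ Finset.Nat.antidiagonalTuple n k, ∏ i, ((w - z i)⁻¹) ^ (f i) := by
  have he : ∀ x, (p.eval x)⁻¹ = a⁻¹ * ∏ i, (x - z i)⁻¹ := by
    intro x
    rw [hp]
    simp [Polynomial.eval_prod, mul_comm]
  have hz : ∀ i, w - z i ≠ 0 := by
    intro i hi
    apply hw
    rw [hp]
    simp only [Polynomial.eval_mul, Polynomial.eval_prod, Polynomial.eval_sub, Polynomial.eval_X,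
      Polynomial.eval_C]
    rw [Finset.prod_eq_zero (Finset.mem_univ i) hi, mul_zero]
  rw [div_eq_mul_inv, he w]
  simp only [he]
  rw [iteratedDeriv_const_mul_field, aux_prod_s5 n z k w hz]
  ring
end
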